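/- Let ι be a type of propositional variables and V_S, V_A', V_A'' ⊆ ι vocabularies with V_S ∩ V_A'' = ∅. Let T_S^l be a theory over V_S, T_B' a theory over V_S ∪ V_A', and T_B'' a theory over V_A' ∪ V_A''. Then the iterated weakest sufficient condition wsc(wsc(T_S^l;T_B';V_A');T_B'';V_A'') is the lower bound of the tightest abstraction from T_S^l with respect to the combined bridging theory T_B' ∩ T_B'' over V_A'': for every theory C over V_A'', (T_B' ∩ T_B'') ∩ C ⊆ T_S^l if and only if (T_B' ∩ T_B'') ∩ C ⊆ wsc(wsc(T_S^l;T_B';V_A');T_B'';V_A''). -/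

import Mathlib

def Agrees {ι : Type*} (W : Set ι) (w w' : ι → Bool) : Prop := ∀ i ∈ W, w i = w' i

def IsOver {ι : Type*} (T : Set (ι → Bool)) (W : Set ι) : Prop :=
  ∀ w w', Agrees W w w' → (w ∈ T ↔ w' ∈ T)

def snc {ι : Type*} (A T : Set (ι → Bool)) (W : Set ι) : Set (ι → Bool) :=
  {w | ∃ w', w' ∈ T ∧ w' ∈ A ∧ Agrees W w' w}

def wsc {ι : Type*} (A T : Set (ι → Bool)) (W : Set ι) : Set (ι → Bool) :=
  {w | ∀ w', Agrees W w w' → w' ∈ T → w' ∈ A}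

/-!
Two worlds that agree on `L ∩ R` can be amalgamated into one that agrees with the first on `L` and
with the second on `R`. If all variables shared between the two layers lie in the intermediate
vocabulary, then the two worlds quantified over by an iterated `wsc` can be amalgamated, so that
the iterated `wsc` equals the one-step `wsc` of the combined bridging theory.
-/

open Set

theorem exists_eqOn_eqOn_of_eqOn_inter {α β : Type*} {s t : Set α} {f g : α → β}
    (h : EqOn f g (s ∩ t)) : ∃ u : α → β, EqOn u f s ∧ EqOn u g t := by
  classical
  exact ⟨s.piecewise f g, s.piecewise_eqOn f g,
    s.eqOn_piecewise.mpr ⟨h.mono (inter_comm t s).subset, eqOn_refl g _⟩⟩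

section WeakestSufficientCondition

variable {ι : Type*} {A C T T₁ T₂ : Set (ι → Bool)} {W W' V₁ V₂ L R : Set ι} {w w' : ι → Bool}

theorem IsOver.mem_iff_of_eqOn (hT : IsOver T W) (h : EqOn w w' W) : w ∈ T ↔ w' ∈ T :=
  hT w w' h

theorem IsOver.mono (hT : IsOver T W) (h : W ⊆ W') : IsOver T W' :=
  fun _ _ hw => hT.mem_iff_of_eqOn (EqOn.mono h hw)

theorem mem_wsc_iff : w ∈ wsc A T W ↔ ∀ w', EqOn w w' W → w' ∈ T → w' ∈ A :=
  Iff.rfl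

theorem inter_wsc_subset : T ∩ wsc A T W ⊆ A :=
  fun w ⟨hwT, hw⟩ => mem_wsc_iff.mp hw w (eqOn_refl w W) hwT

theorem IsOver.subset_wsc_iff (hC : IsOver C W) : C ⊆ wsc A T W ↔ T ∩ C ⊆ A where
  mp h := (inter_subset_inter_right T h).trans inter_wsc_subset
  mpr h _ hw := mem_wsc_iff.mpr fun _ hww' hw' => h ⟨hw', (hC.mem_iff_of_eqOn hww').mp hw⟩

theorem IsOver.inter_subset_wsc_iff (hC : IsOver C W) : T ∩ C ⊆ wsc A T W ↔ T ∩ C ⊆ A where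
  mp h := (subset_inter inter_subset_left h).trans inter_wsc_subset
  mpr h := inter_subset_right.trans (hC.subset_wsc_iff.mpr h)

theorem wsc_wsc_subset : wsc (wsc A T₁ V₁) T₂ V₂ ⊆ wsc A (T₁ ∩ T₂) V₂ :=
  fun _ hw => mem_wsc_iff.mpr fun u hwu ⟨huT₁, huT₂⟩ =>
    inter_wsc_subset ⟨huT₁, mem_wsc_iff.mp hw u hwu huT₂⟩

theorem wsc_inter_subset_wsc_wsc (hLR : L ∩ R ⊆ V₁) (hV₂ : V₂ ⊆ R)
    (hA : IsOver A L) (hT₁ : IsOver T₁ L) (hT₂ : IsOver T₂ R) :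
    wsc A (T₁ ∩ T₂) V₂ ⊆ wsc (wsc A T₁ V₁) T₂ V₂ := by
  intro w hw
  simp only [mem_wsc_iff] at hw ⊢
  intro w₂ hww₂ hw₂ w₁ hw₂w₁ hw₁
  obtain ⟨u, huL, huR⟩ := exists_eqOn_eqOn_of_eqOn_inter (hw₂w₁.symm.mono hLR)
  have huT : u ∈ T₁ ∩ T₂ := ⟨(hT₁.mem_iff_of_eqOn huL).mpr hw₁, (hT₂.mem_iff_of_eqOn huR).mpr hw₂⟩
  have hwu : EqOn w u V₂ := hww₂.trans (huR.mono hV₂).symm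
  exact (hA.mem_iff_of_eqOn huL).mp (hw u hwu huT)

theorem wsc_wsc (hLR : L ∩ R ⊆ V₁) (hV₂ : V₂ ⊆ R)
    (hA : IsOver A L) (hT₁ : IsOver T₁ L) (hT₂ : IsOver T₂ R) :
    wsc (wsc A T₁ V₁) T₂ V₂ = wsc A (T₁ ∩ T₂) V₂ :=
  wsc_wsc_subset.antisymm (wsc_inter_subset_wsc_wsc hLR hV₂ hA hT₁ hT₂)

theorem layered_wsc_compositional_general (hLR : L ∩ R ⊆ V₁) (hV₂ : V₂ ⊆ R)
    (hA : IsOver A L) (hT₁ : IsOver T₁ L) (hT₂ : IsOver T₂ R) (hC : IsOver C V₂) :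
    (T₁ ∩ T₂) ∩ C ⊆ A ↔ (T₁ ∩ T₂) ∩ C ⊆ wsc (wsc A T₁ V₁) T₂ V₂ := by
  rw [wsc_wsc hLR hV₂ hA hT₁ hT₂, hC.inter_subset_wsc_iff]

end WeakestSufficientCondition

theorem layered_wsc_compositional {ι : Type*}
    (VS VA' VA'' : Set ι) (hdisj : VS ∩ VA'' = ∅)
    (TSl TB' TB'' : Set (ι → Bool))
    (hTS : IsOver TSl VS) (hTB' : IsOver TB' (VS ∪ VA')) (hTB'' : IsOver TB'' (VA' ∪ VA'')) :
    ∀ C : Set (ι → Bool), IsOver C VA'' →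
      ((TB' ∩ TB'') ∩ C ⊆ TSl ↔
       (TB' ∩ TB'') ∩ C ⊆ wsc (wsc TSl TB' VA') TB'' VA'') := by
  have hLR : (VS ∪ VA') ∩ (VA' ∪ VA'') ⊆ VA' := by
    rw [union_comm VS, ← union_inter_distrib_left, hdisj, union_empty]
  exact fun _ => layered_wsc_compositional_general hLR subset_union_right
    (hTS.mono subset_union_left) hTB' hTB''
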